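/- arXiv:2101.06024 — 5 statements merged into one kernel-verified Lean document; each statement's English description precedes it below -/
import Mathlib

section
/- Let N ⊆ ℝ^L be a nonempty set and p ∈ ℝ^L. Suppose P : ℝ^L → ℝ^L is differentiable at p, P(q) ∈ N for all q in some neighborhood of p, and ‖p − P(p)‖ = dist(p, N). Then for every v ∈ ℝ^L one has ⟪p − P(p), DP(p)v⟫ = 0, where DP(p) denotes the (Fréchet) derivative of P at p. (This is the cancellation identity Σ_k (p_k − P_N^k(p)) ∂P_N^k/∂p_l(p) = 0 used in the proof of Proposition 4.1.) -/
/-! The function `q ↦ ‖p - P q‖ ^ 2` has a local minimum at `p`, because `P q ∈ N` near `p` and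
`‖p - P p‖` is the distance from `p` to `N`. Its derivative at `p` in direction `v` is
`-2 ⟪p - P p, DP(p) v⟫`, which therefore vanishes by Fermat's criterion. Note that the base point
`p` in the difference is held fixed: only the argument of `P` varies. -/

open Metric RealInnerProductSpace

/-- If `P` is differentiable at `p`, maps a neighborhood of `p` into `N`, and `P p` is a
nearest point of `N` to `p`, then the residual `p - P p` is orthogonal to the range of the
derivative `DP(p)`. -/
theorem stmt_1 {L : ℕ} (hL : 1 ≤ L)
    (N : Set (EuclideanSpace ℝ (Fin L))) (hN : N.Nonempty)
    (p : EuclideanSpace ℝ (Fin L))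
    (P : EuclideanSpace ℝ (Fin L) → EuclideanSpace ℝ (Fin L))
    (hP : DifferentiableAt ℝ P p)
    (hmem : ∀ᶠ q in nhds p, P q ∈ N)
    (hnear : ‖p - P p‖ = Metric.infDist p N) :
    ∀ v : EuclideanSpace ℝ (Fin L), ⟪p - P p, fderiv ℝ P p v⟫ = 0 := by
  intro v
  have hmin : IsLocalMin (fun q => ‖p - P q‖ ^ 2) p := by
    filter_upwards [hmem] with q hq
    have h : ‖p - P p‖ ≤ ‖p - P q‖ := by
      rw [hnear, ← dist_eq_norm]
      exact Metric.infDist_le_dist_of_mem hq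
    gcongr
  have hder := (hP.hasFDerivAt.const_sub p).norm_sq
  have hv := DFunLike.congr_fun (hmin.hasFDerivAt_eq_zero hder) v
  simp at hv
  rw [inner_sub_left]
  linarith
end

section
/- Let N ⊆ ℝ^L be a nonempty set and p ∈ ℝ^L. Suppose P : ℝ^L → ℝ^L is differentiable at p and that, for all q in some neighborhood of p, P(q) ∈ N and ‖q − P(q)‖ = dist(q, N). Then the squared distance function q ↦ dist(q, N)² is differentiable at p and its derivative is the linear map v ↦ 2⟪p − P(p), v⟫; equivalently, the gradient of dist(·,N)² at p equals 2(p − P(p)). -/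
/-!
Near `p` the squared distance `f` agrees with `q ↦ ‖q - P q‖ ^ 2`, so it is differentiable at `p`.
Since `P p ∈ N`, it lies below the smooth function `g q = ‖q - P p‖ ^ 2`, with equality at `q = p`.
Hence `g - f` has a minimum at `p`, its derivative vanishes there, and `f` has the derivative
`v ↦ 2⟪p - P p, v⟫` of `g`. In particular the derivative of `P` never has to be computed.
-/

open Metric RealInnerProductSpace

/-- If `P` is a differentiable-at-`p` nearest-point projection onto `N` on a neighborhood of
`p`, then the squared distance function to `N` is differentiable at `p` with derivative
`v ↦ 2⟪p - P p, v⟫`; equivalently its gradient at `p` is `2 • (p - P p)`. -/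
theorem stmt_2 {L : ℕ} (hL : 1 ≤ L)
    (N : Set (EuclideanSpace ℝ (Fin L))) (hN : N.Nonempty)
    (p : EuclideanSpace ℝ (Fin L))
    (P : EuclideanSpace ℝ (Fin L) → EuclideanSpace ℝ (Fin L))
    (hP : DifferentiableAt ℝ P p)
    (hmem : ∀ᶠ q in nhds p, P q ∈ N ∧ ‖q - P q‖ = Metric.infDist q N) :
    HasFDerivAt (fun q => Metric.infDist q N ^ 2) ((2 : ℝ) • innerSL ℝ (p - P p)) p ∧
      gradient (fun q => Metric.infDist q N ^ 2) p = (2 : ℝ) • (p - P p) := by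
  have hdiff : DifferentiableAt ℝ (fun q => infDist q N ^ 2) p := by
    have h : DifferentiableAt ℝ (fun q => ‖q - P q‖ ^ 2) p :=
      (differentiableAt_id.sub hP).norm_sq ℝ
    refine h.congr_of_eventuallyEq ?_
    filter_upwards [hmem] with q hq
    rw [hq.2]
  have hg : HasFDerivAt (fun q => ‖q - P p‖ ^ 2) ((2 : ℝ) • innerSL ℝ (p - P p)) p := by
    have h := ((hasFDerivAt_id (𝕜 := ℝ) p).sub_const (P p)).norm_sq
    refine h.congr_fderiv (ContinuousLinearMap.ext fun v => ?_)
    simp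
  obtain ⟨hpN, hpd⟩ := hmem.self_of_nhds
  have hmin : IsLocalMin (fun q => ‖q - P p‖ ^ 2 - infDist q N ^ 2) p := by
    refine Filter.Eventually.of_forall fun q => ?_
    have hq : infDist q N ≤ ‖q - P p‖ := by
      simpa [dist_eq_norm] using infDist_le_dist_of_mem (x := q) hpN
    have hsq : infDist q N ^ 2 ≤ ‖q - P p‖ ^ 2 := pow_le_pow_left₀ infDist_nonneg hq 2
    simp only [hpd, sub_self]
    exact sub_nonneg.2 hsq
  have hzero := hmin.hasFDerivAt_eq_zero (hg.sub hdiff.hasFDerivAt)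
  have hf : HasFDerivAt (fun q => infDist q N ^ 2) ((2 : ℝ) • innerSL ℝ (p - P p)) p := by
    rw [sub_eq_zero.1 hzero]
    exact hdiff.hasFDerivAt
  refine ⟨hf, HasGradientAt.gradient ?_⟩
  rw [hasGradientAt_iff_hasFDerivAt]
  refine hf.congr_fderiv (ContinuousLinearMap.ext fun v => ?_)
  simp
end

section
/- Let N ⊆ ℝ^L be nonempty, δ > 0, U := {q ∈ ℝ^L : dist(q,N) < 3δ}, and let P : ℝ^L → ℝ^L be twice continuously differentiable on U and be a nearest-point projection onto N on U. Assume the second derivative of P is K-Lipschitz on U, i.e. ‖D²P(q₁)(u,u) − D²P(q₂)(u,u)‖ ≤ K‖q₁ − q₂‖‖u‖² for all q₁, q₂ ∈ U and u ∈ ℝ^L. Let G(q) := dist(q,N)². Then for every p ∈ U and every u ∈ ℝ^L, G is twice differentiable at p and D²G(p)(u,u) + ⟪∇G(p), D²P(P(p))(u,u)⟫ ≥ −2K · dist(p,N)² · ‖u‖², where ∇G(p) denotes the gradient of G at p. (This is the near-region estimate in the proof of Proposition 4.1, where Γ̄(p)(u,u) = D²P(P(p))(u,u) on the region {dist(·,N)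 < δ}.) -/
/-!
Write `d = dist(p, N)` and `A = DP(p)`. For `p ∈ U` the map `q ↦ ‖p - P q‖²` is minimal at `q = p`,
because `P q ∈ N` and `‖p - P p‖ = d`. Hence `⟪p - P p, A u⟫ = 0` for all `u`
(`inner_sub_proj_fderiv_eq_zero`), and so `∇G(p) = 2 (p - P p)` (`hasFDerivAt_sq_dist_proj`)
and `D²G(p)(u,u) = 2 ⟪u - A u, u⟫`.

The orthogonality relation holds on all of the open set `U`, so it may be differentiated in the
direction `u`: `⟪p - P p, D²P(p)(u,u)⟫ = -⟪u - A u, A u⟫`. Therefore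
`D²G(p)(u,u) + ⟪∇G(p), D²P(P p)(u,u)⟫
  = 2 ‖u - A u‖² + 2 ⟪p - P p, D²P(P p)(u,u) - D²P(p)(u,u)⟫`,
and the last term is at least `-2 d · K d ‖u‖²` by Cauchy–Schwarz and the Lipschitz hypothesis,
applied at `p` and `P p`, which are at distance `d`.
-/

open Metric RealInnerProductSpace

/-- First-order condition for the minimum of `q ↦ ‖p - P q‖²` at `q = p`. -/
lemma inner_sub_proj_fderiv_eq_zero {E : Type*} [NormedAddCommGroup E] [InnerProductSpace ℝ E]
    {N U : Set E} (hUo : IsOpen U) {P : E → E}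
    (hproj : ∀ q ∈ U, P q ∈ N ∧ ‖q - P q‖ = Metric.infDist q N)
    {p : E} (hp : p ∈ U) (hd : DifferentiableAt ℝ P p) (u : E) :
    ⟪p - P p, fderiv ℝ P p u⟫ = 0 := by
  have hmin : IsLocalMin (fun q => ‖p - P q‖ ^ 2) p := by
    filter_upwards [hUo.mem_nhds hp] with q hq
    have h1 : ‖p - P p‖ ≤ ‖p - P q‖ := by
      rw [(hproj p hp).2, ← dist_eq_norm]
      exact Metric.infDist_le_dist_of_mem (hproj q hq).1
    gcongr
  have hder := (hd.hasFDerivAt.const_sub p).norm_sq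
  have h := congrArg (fun f => f u) (hmin.hasFDerivAt_eq_zero hder)
  simp only [inner_sub_left]
  simp at h
  linarith

/-- The derivative of `‖q - P q‖²`; the term involving `DP` drops out by orthogonality. -/
lemma hasFDerivAt_sq_dist_proj {E : Type*} [NormedAddCommGroup E] [InnerProductSpace ℝ E]
    {N U : Set E} (hUo : IsOpen U) {P : E → E}
    (hproj : ∀ q ∈ U, P q ∈ N ∧ ‖q - P q‖ = Metric.infDist q N)
    {G : E → ℝ} (hG : ∀ q, G q = Metric.infDist q N ^ 2)
    {p : E} (hp : p ∈ U) (hd : DifferentiableAt ℝ P p) :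
    HasFDerivAt G (innerSL ℝ ((2 : ℝ) • (p - P p))) p := by
  have hder := ((hasFDerivAt_id p).sub hd.hasFDerivAt).norm_sq
  have heq : G =ᶠ[nhds p] fun q => ‖q - P q‖ ^ 2 := by
    filter_upwards [hUo.mem_nhds hp] with q hq
    rw [hG, (hproj q hq).2]
  refine (hder.congr_of_eventuallyEq heq).congr_fderiv ?_
  ext u
  have h0 := inner_sub_proj_fderiv_eq_zero hUo hproj hp hd u
  rw [inner_sub_left] at h0
  simpa using h0

/-- Near-region Hessian estimate for the squared distance function: if `P` is a `C²`
nearest-point projection onto `N` on `U = {dist(·,N) < 3δ}` whose second derivative is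
`K`-Lipschitz on `U`, and `G = dist(·,N)²`, then for `p ∈ U` the function `G` is twice
differentiable at `p` and
`D²G(p)(u,u) + ⟪∇G(p), D²P(P p)(u,u)⟫ ≥ -2K·dist(p,N)²·‖u‖²`. -/
theorem stmt_5 {L : ℕ} (hL : 1 ≤ L)
    (N : Set (EuclideanSpace ℝ (Fin L))) (hN : N.Nonempty)
    (δ : ℝ) (hδ : 0 < δ)
    (U : Set (EuclideanSpace ℝ (Fin L)))
    (hU : U = {q | Metric.infDist q N < 3 * δ})
    (P : EuclideanSpace ℝ (Fin L) → EuclideanSpace ℝ (Fin L))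
    (hP : ContDiffOn ℝ 2 P U)
    (hproj : ∀ q ∈ U, P q ∈ N ∧ ‖q - P q‖ = Metric.infDist q N)
    (K : ℝ)
    (hLip : ∀ q₁ ∈ U, ∀ q₂ ∈ U, ∀ u : EuclideanSpace ℝ (Fin L),
      ‖fderiv ℝ (fderiv ℝ P) q₁ u u - fderiv ℝ (fderiv ℝ P) q₂ u u‖ ≤
        K * ‖q₁ - q₂‖ * ‖u‖ ^ 2)
    (G : EuclideanSpace ℝ (Fin L) → ℝ)
    (hG : ∀ q, G q = Metric.infDist q N ^ 2) :
    ∀ p ∈ U, DifferentiableAt ℝ (fderiv ℝ G) p ∧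
      ∀ u : EuclideanSpace ℝ (Fin L),
        fderiv ℝ (fderiv ℝ G) p u u + ⟪gradient G p, fderiv ℝ (fderiv ℝ P) (P p) u u⟫ ≥
          -2 * K * Metric.infDist p N ^ 2 * ‖u‖ ^ 2 := by
  intro p hp
  have hUo : IsOpen U := by
    rw [hU]
    exact isOpen_lt (Metric.continuous_infDist_pt N) continuous_const
  have hCD : ∀ q ∈ U, ContDiffAt ℝ 2 P q := fun q hq => hP.contDiffAt (hUo.mem_nhds hq)
  have hd : ∀ q ∈ U, DifferentiableAt ℝ P q := fun q hq =>
    (hCD q hq).differentiableAt (by norm_num)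
  have hd2 : DifferentiableAt ℝ (fderiv ℝ P) p :=
    ((hCD p hp).fderiv_right (m := 1) (by norm_num)).differentiableAt (by norm_num)
  have hfG : fderiv ℝ G =ᶠ[nhds p] fun q => innerSL ℝ ((2 : ℝ) • (q - P q)) := by
    filter_upwards [hUo.mem_nhds hp] with q hq
    exact (hasFDerivAt_sq_dist_proj hUo hproj hG hq (hd q hq)).fderiv
  have hres := (hasFDerivAt_id (𝕜 := ℝ) p).sub (hd p hp).hasFDerivAt
  have hG2 := (((innerSL ℝ).hasFDerivAt).comp p (hres.const_smul (2 : ℝ))).congr_of_eventuallyEq hfG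
  refine ⟨hG2.differentiableAt, fun u => ?_⟩
  have hHess : fderiv ℝ (fderiv ℝ G) p u u = 2 * ⟪u - fderiv ℝ P p u, u⟫ := by
    rw [hG2.fderiv]
    change ⟪(2 : ℝ) • (u - fderiv ℝ P p u), u⟫ = _
    rw [real_inner_smul_left]
  have hgrad : ∀ v, ⟪gradient G p, v⟫ = 2 * ⟪p - P p, v⟫ := by
    intro v
    rw [gradient, InnerProductSpace.toDual_symm_apply, hfG.self_of_nhds]
    simp [inner_sub_left]
  -- the orthogonality relation, differentiated at `p` in the direction `u`
  have hDorth : ⟪p - P p, fderiv ℝ (fderiv ℝ P) p u u⟫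
      + ⟪u - fderiv ℝ P p u, fderiv ℝ P p u⟫ = 0 := by
    have hz : (fun q => ⟪q - P q, fderiv ℝ P q u⟫) =ᶠ[nhds p] fun _ => (0 : ℝ) := by
      filter_upwards [hUo.mem_nhds hp] with q hq
      exact inner_sub_proj_fderiv_eq_zero hUo hproj hq (hd q hq) u
    have h1 := hres.inner ℝ (hd2.hasFDerivAt.clm_apply (hasFDerivAt_const u p))
    have h2 := (hasFDerivAt_const (𝕜 := ℝ) (0 : ℝ) p).congr_of_eventuallyEq hz
    have h3 := congrArg (fun f => f u) (h1.unique h2)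
    simpa using h3
  have hPU : P p ∈ U := by
    rw [hU, Set.mem_ofPred_eq, Metric.infDist_zero_of_mem (hproj p hp).1]
    positivity
  have hCS : -(K * Metric.infDist p N ^ 2 * ‖u‖ ^ 2) ≤
      ⟪p - P p, fderiv ℝ (fderiv ℝ P) (P p) u u - fderiv ℝ (fderiv ℝ P) p u u⟫ := by
    have h1 := hLip (P p) hPU p hp u
    rw [norm_sub_rev (P p) p] at h1
    have h2 := (abs_le.mp (abs_real_inner_le_norm (p - P p)
      (fderiv ℝ (fderiv ℝ P) (P p) u u - fderiv ℝ (fderiv ℝ P) p u u))).1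
    have h3 := mul_le_mul_of_nonneg_left h1 (norm_nonneg (p - P p))
    rw [← (hproj p hp).2]
    linarith
  have hsq : 0 ≤ ⟪u - fderiv ℝ P p u, u - fderiv ℝ P p u⟫ := real_inner_self_nonneg
  rw [inner_sub_right] at hsq hCS
  rw [hHess, hgrad]
  linarith
end

section
/- Let N ⊆ ℝ^L be nonempty and compact, δ > 0, U := {q ∈ ℝ^L : dist(q,N) < 3δ}. Suppose P : ℝ^L → ℝ^L is C^∞ on U and is a nearest-point projection onto N on U, and that q ↦ dist(q,N)² is C^∞ on U. Let χ : ℝ → ℝ be C^∞ and nondecreasing with χ(s) = s for s ≤ δ² and χ(s) = 4δ² for s ≥ 4δ², and let φ : ℝ → ℝ be C^∞ with 0 ≤ φ ≤ 1, φ(s) = 1 for s < δ and φ(s) = 0 for s > 2δ. Define G(p) := χ(dist(p,N)²) and Γ̄(p)(u,u) := φ(dist(p,N)) · D²P(P(p))(u,u) for dist(p,N) < 2δ, Γ̄(p) := 0 otherwise. Then there exists a constant c ≥ 0 such that for all p, u ∈ ℝ^L: D²G(p)(u,u) + ⟪∇G(p), Γ̄(p)(u,u)⟫ ≥ −c ·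 G(p) · (1 + ‖u‖²), where ∇G and D²G denote the gradient and Hessian of G. (This is the key inequality (4.2) in the proof of Proposition 4.1.) -/
/-!
Write `n = p - P p`. Since `dist(·,N)²` is touched from above at `p` by `‖· - P p‖²`, its
derivative on `U` is `2⟪p - P p, ·⟫`, and hence its Hessian is `2(1 - DP(p))`. Symmetry of the
Hessian makes `DP` symmetric on `U`, so that `⟪D²P(q)(a,b), c⟫` is a totally symmetric trilinear
form (`inner_snd_fderiv_perm`). On `U` we have `P ∘ P = P`, so on `N` the map `DP` is a symmetric
idempotent and `1 - DP ≥ 0` (`inner_fderiv_proj_le`).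

For `dist(p,N) < δ` we have `G = dist(·,N)²` near `p` and `φ = 1`. Expanding `DP` around `P p ∈ N`,
`DP(p) = DP(P p) + D²P(P p)(n) + O(‖n‖²)`, the first-order term of the Hessian is
`-2⟪D²P(P p)(n,u), u⟫ = -2⟪n, D²P(P p)(u,u)⟫`, which cancels the term with `Γ` exactly. What is
left is the nonnegative `2⟪(1 - DP(P p))u, u⟫` and an error `O(‖n‖²‖u‖²) = O(G(p)‖u‖²)`.

For `δ ≤ dist(p,N) ≤ 2δ` everything is bounded by compactness while `G ≥ δ²`, and for
`dist(p,N) > 2δ` the function `G` is locally constant.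
-/

open Metric RealInnerProductSpace

section helpers

variable {E : Type*} [NormedAddCommGroup E] [InnerProductSpace ℝ E]

/-- The derivative of the squared distance: `‖· - P q‖²` touches it from above at `q`. -/
lemma hasFDerivAt_sq_infDist {N : Set E} {P : E → E} {q : E}
    (hPN : P q ∈ N) (hPq : ‖q - P q‖ = infDist q N)
    (hd : DifferentiableAt ℝ (fun q => infDist q N ^ 2) q) :
    HasFDerivAt (fun q => infDist q N ^ 2) ((2 : ℝ) • innerSL ℝ (q - P q)) q := by
  have h1 : HasFDerivAt (fun x : E => ‖x - P q‖ ^ 2) ((2 : ℝ) • innerSL ℝ (q - P q)) q := by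
    have := ((hasFDerivAt_id q).sub_const (P q)).norm_sq
    refine this.congr_fderiv ?_
    ext v
    simp
  have hmin : IsLocalMin (fun x : E => ‖x - P q‖ ^ 2 - infDist x N ^ 2) q := by
    refine Filter.Eventually.of_forall fun x => ?_
    have h2 : infDist x N ≤ ‖x - P q‖ := by
      rw [← dist_eq_norm]; exact infDist_le_dist_of_mem hPN
    have h3 : infDist x N ^ 2 ≤ ‖x - P q‖ ^ 2 := by gcongr; exact infDist_nonneg
    simp only [hPq]
    linarith
  have h0 := hmin.hasFDerivAt_eq_zero (h1.sub hd.hasFDerivAt)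
  rw [sub_eq_zero] at h0
  rw [h0]
  exact hd.hasFDerivAt

/-- Near a point where the derivative of `f` is `2⟪q - P q, ·⟫`, the Hessian of `f` is
`2(1 - DP)`. -/
lemma snd_fderiv_of_fderiv_eq {f : E → ℝ} {P : E → E} {q : E}
    (hf : ∀ᶠ x in nhds q, fderiv ℝ f x = (2 : ℝ) • innerSL ℝ (x - P x))
    (hP : DifferentiableAt ℝ P q) (u v : E) :
    fderiv ℝ (fderiv ℝ f) q u v = 2 * ⟪u - fderiv ℝ P q u, v⟫ := by
  have h1 : HasFDerivAt (fun x => (2 : ℝ) • innerSL ℝ (x - P x))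
      ((2 : ℝ) • (innerSL ℝ).comp (ContinuousLinearMap.id ℝ E - fderiv ℝ P q)) q :=
    (((innerSL ℝ (E := E)).hasFDerivAt.comp q
      ((hasFDerivAt_id q).sub hP.hasFDerivAt))).const_smul (2 : ℝ)
  rw [(h1.congr_of_eventuallyEq hf).fderiv]
  change (2 : ℝ) * innerSL ℝ (u - fderiv ℝ P q u) v = _
  rw [innerSL_apply_apply]

/-- If `DP` is symmetric near `q`, then `⟪D²P(q)(a,b), c⟫` is invariant under the permutation
exchanging `a` and `c`. -/
lemma inner_snd_fderiv_perm {P : E → E} {q : E}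
    (hsym : ∀ᶠ x in nhds q, ∀ u v, ⟪fderiv ℝ P x u, v⟫ = ⟪fderiv ℝ P x v, u⟫)
    (hP : ContDiffAt ℝ 2 P q) (a b c : E) :
    ⟪fderiv ℝ (fderiv ℝ P) q a b, c⟫ = ⟪fderiv ℝ (fderiv ℝ P) q c b, a⟫ := by
  have hd : DifferentiableAt ℝ (fderiv ℝ P) q :=
    (hP.fderiv_right (m := 1) (by norm_num)).differentiableAt (by norm_num)
  have hs : IsSymmSndFDerivAt ℝ P q := hP.isSymmSndFDerivAt (by simp)
  have key : ∀ w u v, ⟪fderiv ℝ (fderiv ℝ P) q w u, v⟫ = ⟪fderiv ℝ (fderiv ℝ P) q w v, u⟫ := by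
    intro w u v
    have h : ∀ u v, HasFDerivAt (fun x => ⟪v, fderiv ℝ P x u⟫)
        ((innerSL ℝ v).comp ((ContinuousLinearMap.apply ℝ E u).comp
          (fderiv ℝ (fderiv ℝ P) q))) q := fun u v =>
      (innerSL ℝ v).hasFDerivAt.comp q
        ((ContinuousLinearMap.apply ℝ E u).hasFDerivAt.comp q hd.hasFDerivAt)
    have h2 := (h u v).congr_of_eventuallyEq (f₁ := fun x => ⟪u, fderiv ℝ P x v⟫) (by
      filter_upwards [hsym] with x hx
      rw [real_inner_comm, real_inner_comm _ v]; exact hx v u)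
    have h3 := DFunLike.congr_fun (h2.unique (h v u)) w
    simp only [ContinuousLinearMap.comp_apply, ContinuousLinearMap.apply_apply,
      innerSL_apply_apply] at h3
    rw [real_inner_comm, h3, real_inner_comm]
  rw [hs.eq a b, key b a c, hs.eq b c]

/-- At a fixed point of `P` with `P ∘ P = P` nearby, a symmetric `DP` is an orthogonal projection,
whence `DP ≤ 1`. -/
lemma inner_fderiv_proj_le {P : E → E} {q : E} (hq : P q = q)
    (hPP : ∀ᶠ x in nhds q, P (P x) = P x) (hP : DifferentiableAt ℝ P q)
    (hsym : ∀ u v, ⟪fderiv ℝ P q u, v⟫ = ⟪fderiv ℝ P q v, u⟫) (u : E) :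
    0 ≤ ⟪u - fderiv ℝ P q u, u⟫ := by
  have h1 : HasFDerivAt (fun x => P (P x)) ((fderiv ℝ P q).comp (fderiv ℝ P q)) q := by
    have h' : HasFDerivAt P (fderiv ℝ P q) (P q) := by rw [hq]; exact hP.hasFDerivAt
    exact h'.comp q hP.hasFDerivAt
  have h2 := (hP.hasFDerivAt.congr_of_eventuallyEq hPP).unique h1
  have h3 : fderiv ℝ P q (fderiv ℝ P q u) = fderiv ℝ P q u :=
    (DFunLike.congr_fun h2 u).symm
  have h4 : ⟪fderiv ℝ P q u, fderiv ℝ P q u⟫ = ⟪fderiv ℝ P q u, u⟫ := by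
    rw [hsym u (fderiv ℝ P q u), h3]
  have h5 : 0 ≤ ⟪u - fderiv ℝ P q u, u - fderiv ℝ P q u⟫ := real_inner_self_nonneg
  rw [inner_sub_right, inner_sub_left u _ (fderiv ℝ P q u), h4,
    real_inner_comm (fderiv ℝ P q u) u] at h5
  linarith

/-- First-order Taylor expansion with a quadratic remainder that is uniform over all balls
contained in a given compact set. -/
lemma exists_norm_taylor_le {F : Type*} [NormedAddCommGroup F] [NormedSpace ℝ F] {g : E → F}
    {K : Set E} (hK : IsCompact K) (hg : ∀ x ∈ K, ContDiffAt ℝ 2 g x) :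
    ∃ M ≥ (0 : ℝ), ∀ a b, closedBall a ‖b - a‖ ⊆ K →
      ‖g b - g a - fderiv ℝ g a (b - a)‖ ≤ M * ‖b - a‖ ^ 2 := by
  have hg1 : ∀ x ∈ K, ContDiffAt ℝ 1 (fderiv ℝ g) x := fun x hx =>
    (hg x hx).fderiv_right (by norm_num)
  have hg2 : ∀ x ∈ K, ContDiffAt ℝ 0 (fderiv ℝ (fderiv ℝ g)) x := fun x hx =>
    (hg1 x hx).fderiv_right (by norm_num)
  obtain ⟨M, hM⟩ := hK.exists_bound_of_continuousOn (f := fderiv ℝ (fderiv ℝ g))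
    (fun x hx => (hg2 x hx).continuousAt.continuousWithinAt)
  refine ⟨max M 0, le_max_right _ _, fun a b hab => ?_⟩
  have ha : a ∈ closedBall a ‖b - a‖ := mem_closedBall_self (norm_nonneg _)
  have hb : b ∈ closedBall a ‖b - a‖ := by simp [dist_eq_norm]
  have h1 : ∀ x ∈ closedBall a ‖b - a‖, ‖fderiv ℝ g x - fderiv ℝ g a‖ ≤ max M 0 * ‖b - a‖ := by
    intro x hx
    refine ((convex_closedBall a _).norm_image_sub_le_of_norm_fderiv_le (𝕜 := ℝ)
      (fun y hy => (hg1 y (hab hy)).differentiableAt (by norm_num))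
      (fun y hy => (hM y (hab hy)).trans (le_max_left M 0)) ha hx).trans ?_
    gcongr
    simpa [dist_eq_norm] using hx
  have h2 := (convex_closedBall a ‖b - a‖).norm_image_sub_le_of_norm_fderiv_le' (𝕜 := ℝ)
    (fun y hy => (hg y (hab hy)).differentiableAt (by norm_num)) h1 ha hb
  calc _ ≤ _ := h2
    _ = _ := by ring

end helpers

/-- Key inequality (4.2): with `G(p) = χ(dist(p,N)²)` the truncated squared distance
function and `Γ̄` the extended second fundamental form, there is a constant `c ≥ 0` with
`D²G(p)(u,u) + ⟪∇G(p), Γ̄(p)(u,u)⟫ ≥ -c·G(p)·(1 + ‖u‖²)` for all `p, u`. -/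
theorem stmt_8 {L : ℕ} (hL : 1 ≤ L)
    (N : Set (EuclideanSpace ℝ (Fin L))) (hN : N.Nonempty) (hNc : IsCompact N)
    (δ : ℝ) (hδ : 0 < δ)
    (U : Set (EuclideanSpace ℝ (Fin L)))
    (hU : U = {q | Metric.infDist q N < 3 * δ})
    (P : EuclideanSpace ℝ (Fin L) → EuclideanSpace ℝ (Fin L))
    (hP : ContDiffOn ℝ (⊤ : ℕ∞) P U)
    (hproj : ∀ q ∈ U, P q ∈ N ∧ ‖q - P q‖ = Metric.infDist q N)
    (hdist : ContDiffOn ℝ (⊤ : ℕ∞) (fun q => Metric.infDist q N ^ 2) U)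
    (χ : ℝ → ℝ) (hχ : ContDiff ℝ (⊤ : ℕ∞) χ) (hχmono : Monotone χ)
    (hχ₁ : ∀ s ≤ δ ^ 2, χ s = s) (hχ₂ : ∀ s ≥ 4 * δ ^ 2, χ s = 4 * δ ^ 2)
    (φ : ℝ → ℝ) (hφ : ContDiff ℝ (⊤ : ℕ∞) φ)
    (hφ01 : ∀ s, 0 ≤ φ s ∧ φ s ≤ 1)
    (hφ1 : ∀ s < δ, φ s = 1) (hφ0 : ∀ s > 2 * δ, φ s = 0)
    (G : EuclideanSpace ℝ (Fin L) → ℝ)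
    (hG : ∀ p, G p = χ (Metric.infDist p N ^ 2))
    (Γ : EuclideanSpace ℝ (Fin L) →
      EuclideanSpace ℝ (Fin L) →L[ℝ] EuclideanSpace ℝ (Fin L) →L[ℝ] EuclideanSpace ℝ (Fin L))
    (hΓ : ∀ p, Γ p = if Metric.infDist p N < 2 * δ
      then φ (Metric.infDist p N) • fderiv ℝ (fderiv ℝ P) (P p) else 0) :
    ∃ c ≥ (0 : ℝ), ∀ (p u : EuclideanSpace ℝ (Fin L)),
      fderiv ℝ (fderiv ℝ G) p u u + ⟪gradient G p, Γ p u u⟫ ≥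
        -c * G p * (1 + ‖u‖ ^ 2) := by
  set f : EuclideanSpace ℝ (Fin L) → ℝ := fun q => infDist q N ^ 2 with hfdef
  have hUo : IsOpen U := by
    rw [hU]; exact isOpen_lt (continuous_infDist_pt N) continuous_const
  have hUmem : ∀ q, q ∈ U ↔ infDist q N < 3 * δ := fun q => by rw [hU]; rfl
  have hNU : N ⊆ U := fun q hq => by rw [hUmem, infDist_zero_of_mem hq]; positivity
  have hPat : ∀ q ∈ U, ContDiffAt ℝ (⊤ : ℕ∞) P q := fun q hq => hP.contDiffAt (hUo.mem_nhds hq)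
  have hfat : ∀ q ∈ U, ContDiffAt ℝ (⊤ : ℕ∞) f q := fun q hq =>
    hdist.contDiffAt (hUo.mem_nhds hq)
  have hPid : ∀ q ∈ N, P q = q := fun q hq => by
    have h := (hproj q (hNU hq)).2
    rw [infDist_zero_of_mem hq, norm_eq_zero, sub_eq_zero] at h
    exact h.symm
  have hPd : ∀ q ∈ U, DifferentiableAt ℝ P q := fun q hq =>
    (hPat q hq).differentiableAt (by simp)
  have hf1 : ∀ q ∈ U, fderiv ℝ f q = (2 : ℝ) • innerSL ℝ (q - P q) := fun q hq =>
    (hasFDerivAt_sq_infDist (hproj q hq).1 (hproj q hq).2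
      ((hfat q hq).differentiableAt (by simp))).fderiv
  have hf2 : ∀ q ∈ U, ∀ u v,
      fderiv ℝ (fderiv ℝ f) q u v = 2 * ⟪u - fderiv ℝ P q u, v⟫ := fun q hq =>
    snd_fderiv_of_fderiv_eq (Filter.eventually_of_mem (hUo.mem_nhds hq) hf1) (hPd q hq)
  have hsym : ∀ q ∈ U, ∀ u v, ⟪fderiv ℝ P q u, v⟫ = ⟪fderiv ℝ P q v, u⟫ := by
    intro q hq u v
    have hs : IsSymmSndFDerivAt ℝ f q := (hfat q hq).isSymmSndFDerivAt (by simp; norm_cast)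
    have h := hs.eq u v
    rw [hf2 q hq, hf2 q hq, inner_sub_left, inner_sub_left, real_inner_comm v u] at h
    linarith
  -- Uniform bounds on compact neighbourhoods of `N`.
  have hKc : IsCompact {q : EuclideanSpace ℝ (Fin L) | infDist q N ≤ 2 * δ} := by
    have h := hNc.cthickening (r := 2 * δ)
    refine h.of_isClosed_subset (isClosed_le (continuous_infDist_pt N) continuous_const) ?_
    intro q hq
    obtain ⟨y, hy, hqy⟩ := hNc.exists_infDist_eq_dist hN q
    exact mem_cthickening_of_dist_le q y _ N hy (hqy ▸ hq)
  have hKU : {q : EuclideanSpace ℝ (Fin L) | infDist q N ≤ 2 * δ} ⊆ U := fun q hq => by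
    rw [hUmem]; have : infDist q N ≤ 2 * δ := hq
    linarith
  have hP1 : ∀ q ∈ U, ContDiffAt ℝ 2 (fderiv ℝ P) q := fun q hq =>
    (hPat q hq).fderiv_right (by norm_cast)
  have hP2 : ∀ q ∈ U, ContDiffAt ℝ 1 (fderiv ℝ (fderiv ℝ P)) q := fun q hq =>
    (hP1 q hq).fderiv_right (by norm_num)
  obtain ⟨B, hB⟩ := hNc.exists_bound_of_continuousOn (f := fderiv ℝ (fderiv ℝ P))
    (fun q hq => (hP2 q (hNU hq)).continuousAt.continuousWithinAt)
  obtain ⟨M, hM0, hM⟩ := exists_norm_taylor_le (g := fderiv ℝ P) hKc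
    (fun q hq => hP1 q (hKU hq))
  -- `G` is smooth on `U` and locally constant off the `2δ`-neighbourhood.
  have hGf : G = fun p => χ (f p) := funext hG
  have hGat : ∀ q ∈ U, ContDiffAt ℝ (⊤ : ℕ∞) G q := fun q hq => by
    rw [hGf]; exact hχ.contDiffAt.comp q (hfat q hq)
  have hG1 : ∀ q ∈ U, ContDiffAt ℝ 1 (fderiv ℝ G) q := fun q hq =>
    (hGat q hq).fderiv_right (by norm_cast)
  have hG2 : ∀ q ∈ U, ContDiffAt ℝ 0 (fderiv ℝ (fderiv ℝ G)) q := fun q hq =>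
    (hG1 q hq).fderiv_right (by norm_num)
  obtain ⟨A₁, hA₁⟩ := hKc.exists_bound_of_continuousOn (f := fderiv ℝ G)
    (fun q hq => (hG1 q (hKU hq)).continuousAt.continuousWithinAt)
  obtain ⟨A₂, hA₂⟩ := hKc.exists_bound_of_continuousOn (f := fderiv ℝ (fderiv ℝ G))
    (fun q hq => (hG2 q (hKU hq)).continuousAt.continuousWithinAt)
  have hgrad : ∀ p v, ⟪gradient G p, v⟫ = fderiv ℝ G p v := fun p v => by
    simp [gradient]
  have hGnn : ∀ p, 0 ≤ G p := fun p => by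
    rw [hG]
    have h := hχmono (sq_nonneg (infDist p N))
    rwa [hχ₁ 0 (by positivity)] at h
  have hNK : N ⊆ {q : EuclideanSpace ℝ (Fin L) | infDist q N ≤ 2 * δ} := fun q hq => by
    rw [Set.mem_ofPred_eq, infDist_zero_of_mem hq]; positivity
  obtain ⟨q₀, hq₀⟩ := hN
  have hB0 : 0 ≤ B := (norm_nonneg _).trans (hB q₀ hq₀)
  have hA₁0 : 0 ≤ A₁ := (norm_nonneg _).trans (hA₁ q₀ (hNK hq₀))
  have hA₂0 : 0 ≤ A₂ := (norm_nonneg _).trans (hA₂ q₀ (hNK hq₀))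
  refine ⟨2 * M + (A₂ + A₁ * B) / δ ^ 2, by positivity, fun p u => ?_⟩
  rw [hgrad]
  have hGp := hGnn p
  rcases lt_or_ge (infDist p N) δ with hlt | hge
  · -- Near `N`: Taylor expansion of `DP` around `P p`.
    have hpU : p ∈ U := by rw [hUmem]; linarith
    obtain ⟨hPN, hPdist⟩ := hproj p hpU
    have hPU := hNU hPN
    have hGe : G =ᶠ[nhds p] f := by
      filter_upwards [(isOpen_lt (continuous_infDist_pt N) continuous_const).mem_nhds hlt]
        with x hx
      have hx : infDist x N < δ := hx
      rw [hG]
      exact hχ₁ _ (by gcongr; exact infDist_nonneg)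
    rw [hGe.fderiv.fderiv_eq, hGe.fderiv_eq, hf2 p hpU, hf1 p hpU, hΓ, if_pos (by linarith),
      hφ1 _ hlt, one_smul]
    have hGpe : G p = ‖p - P p‖ ^ 2 := by rw [hGe.eq_of_nhds, hPdist]
    have hball : ∀ x ∈ closedBall (P p) ‖p - P p‖, infDist x N ≤ 2 * δ := fun x hx => by
      have h1 : infDist x N ≤ dist x (P p) := infDist_le_dist_of_mem hPN
      have h2 : dist x (P p) ≤ ‖p - P p‖ := hx
      linarith
    have hT := hM (P p) p hball
    have hpos := inner_fderiv_proj_le (hPid _ hPN)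
      (Filter.eventually_of_mem (hUo.mem_nhds hPU) fun x hx => hPid _ (hproj x hx).1)
      (hPd _ hPU) (hsym _ hPU) u
    have hperm := inner_snd_fderiv_perm
      (Filter.eventually_of_mem (hUo.mem_nhds hPU) hsym)
      ((hPat _ hPU).of_le (by norm_cast)) (p - P p) u u
    set R := fderiv ℝ P p - fderiv ℝ P (P p) - fderiv ℝ (fderiv ℝ P) (P p) (p - P p) with hR
    have hDP : fderiv ℝ P p u
        = fderiv ℝ P (P p) u + fderiv ℝ (fderiv ℝ P) (P p) (p - P p) u + R u := by
      simp [hR]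
    have hRu : ⟪R u, u⟫ ≤ M * ‖p - P p‖ ^ 2 * ‖u‖ ^ 2 := by
      calc ⟪R u, u⟫ ≤ ‖R u‖ * ‖u‖ := real_inner_le_norm _ _
        _ ≤ (‖R‖ * ‖u‖) * ‖u‖ := by gcongr; exact R.le_opNorm u
        _ = ‖R‖ * ‖u‖ ^ 2 := by ring
        _ ≤ _ := by gcongr
    have hLHS : 2 * ⟪u - fderiv ℝ P p u, u⟫
        + ((2 : ℝ) • innerSL ℝ (p - P p)) (fderiv ℝ (fderiv ℝ P) (P p) u u)
        = 2 * ⟪u - fderiv ℝ P (P p) u, u⟫ - 2 * ⟪R u, u⟫ := by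
      rw [hDP]
      simp only [inner_sub_left, inner_add_left, hperm, smul_apply,
        innerSL_apply_apply, smul_eq_mul]
      rw [real_inner_comm (p - P p) (fderiv ℝ (fderiv ℝ P) (P p) u u)]
      simp only [inner_sub_left]
      ring
    rw [hLHS, ge_iff_le]
    have hc : 0 ≤ (A₂ + A₁ * B) / δ ^ 2 * G p * (1 + ‖u‖ ^ 2) := by positivity
    have hm : 0 ≤ M * G p := by positivity
    rw [← hGpe] at hRu
    linarith
  · rcases le_or_gt (infDist p N) (2 * δ) with hle | hgt
    · -- The intermediate region: crude bounds, with `G p ≥ δ²`.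
      have hGδ : δ ^ 2 ≤ G p := by
        rw [hG, ← hχ₁ (δ ^ 2) le_rfl]
        exact hχmono (by gcongr)
      have hPN := (hproj p (hKU hle)).1
      have hΓb : ‖Γ p u u‖ ≤ B * ‖u‖ * ‖u‖ := by
        rw [hΓ]
        split_ifs
        · change ‖φ (infDist p N) • fderiv ℝ (fderiv ℝ P) (P p) u u‖ ≤ _
          rw [norm_smul, Real.norm_of_nonneg (hφ01 _).1]
          refine (mul_le_of_le_one_left (norm_nonneg _) (hφ01 _).2).trans ?_
          refine ((fderiv ℝ (fderiv ℝ P) (P p)).le_opNorm₂ u u).trans ?_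
          gcongr
          exact hB _ hPN
        · change ‖(0 : EuclideanSpace ℝ (Fin L))‖ ≤ _
          rw [norm_zero]
          positivity
      have h1 : |fderiv ℝ (fderiv ℝ G) p u u| ≤ A₂ * ‖u‖ ^ 2 := by
        calc _ ≤ ‖fderiv ℝ (fderiv ℝ G) p‖ * ‖u‖ * ‖u‖ :=
              (fderiv ℝ (fderiv ℝ G) p).le_opNorm₂ u u
          _ = ‖fderiv ℝ (fderiv ℝ G) p‖ * ‖u‖ ^ 2 := by ring
          _ ≤ _ := by gcongr; exact hA₂ p hle
      have h2 : |fderiv ℝ G p (Γ p u u)| ≤ A₁ * B * ‖u‖ ^ 2 := by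
        calc _ ≤ ‖fderiv ℝ G p‖ * ‖Γ p u u‖ := (fderiv ℝ G p).le_opNorm _
          _ ≤ A₁ * (B * ‖u‖ * ‖u‖) := by
              gcongr
              exact hA₁ p hle
          _ = _ := by ring
      have h3 : (A₂ + A₁ * B) * (1 + ‖u‖ ^ 2)
          ≤ (A₂ + A₁ * B) / δ ^ 2 * G p * (1 + ‖u‖ ^ 2) := by
        gcongr
        rw [div_mul_eq_mul_div, le_div_iff₀ (by positivity)]
        gcongr
      have h4 : 0 ≤ M * G p * (1 + ‖u‖ ^ 2) := by positivity
      have h5 : 0 ≤ A₂ + A₁ * B := by positivity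
      have h6 := neg_abs_le (fderiv ℝ (fderiv ℝ G) p u u)
      have h7 := neg_abs_le (fderiv ℝ G p (Γ p u u))
      rw [ge_iff_le]
      linarith
    · -- Away from `N` the function `G` is locally constant.
      have hGe : G =ᶠ[nhds p] fun _ => 4 * δ ^ 2 := by
        filter_upwards [(isOpen_lt continuous_const (continuous_infDist_pt N)).mem_nhds hgt]
          with x hx
        have hx : 2 * δ < infDist x N := hx
        rw [hG]
        refine hχ₂ _ ?_
        nlinarith
      rw [hGe.fderiv.fderiv_eq, hGe.fderiv_eq]
      have : 0 ≤ (2 * M + (A₂ + A₁ * B) / δ ^ 2) * G p * (1 + ‖u‖ ^ 2) := by positivity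
      simp
      linarith
end

section
/- Let M ⊆ ℝ^{L₁} be nonempty and compact, δ > 0, U := {x ∈ ℝ^{L₁} : dist(x,M) < 3δ}. Suppose P : ℝ^{L₁} → ℝ^{L₁} is C^∞ on U and is a nearest-point projection onto M on U, and that x ↦ dist(x,M)² is C^∞ on U. Let φ : ℝ → ℝ be C^∞ with 0 ≤ φ ≤ 1, φ(s) = 1 for s < δ and φ(s) = 0 for s > 2δ. Then there exists a constant c > 0, depending only on M, δ, P and φ (not on h), such that for every continuously differentiable map h : ℝ^{L₁} → ℝ^{L₂}, the map h̄ : ℝ^{L₁} → ℝ^{L₂} defined by h̄(x) := φ(dist(x,M)) · h(P(x)) for dist(x,M) < 2δ and h̄(x) := 0 otherwise, is continuously differentiable on ℝ^{L₁}, satisfies h̄(x) = h(x) for every x ∈ M, and obeys the bounds sup_{x ∈ ℝ^{L₁}} ‖h̄(x)‖ ≤ sup_{y ∈ M} ‖h(y)‖ and sup_{x ∈ ℝ^{L₁}} ‖Dh̄(x)‖ ≤ c · ( sup_{y ∈ M} ‖h(y)‖ + sup_{y ∈ M} ‖Dh(y)‖ ). (This is the derivative bound for the cutoff extension h̄ of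 h used in Step (ii) of the proof of Theorem 2.1.) -/
/-!
Write `d x = dist(x, M)` and `ψ = φ ∘ d`. The function `ψ` is `C^∞` on the whole space
(`contDiff_cutoff`): it is constant near points with `d < δ` and near points with `d > 2δ`, while
for `0 < d < 3δ` the distance `d = √(d²)` is itself smooth. By continuity `φ (2δ) = 0`, so `h̄` is
given by the single formula `ψ • (h ∘ P)` everywhere. It is `C¹` on `U` as a product, and it vanishes
near every point with `d > 2δ`.

Since `P` takes values in `M` on `U` and `0 ≤ ψ ≤ 1`, the sup bound is immediate. On the compact set
`K = {d ≤ 2δ} ⊆ U` the product rule gives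
`‖Dh̄‖ ≤ ‖Dh (P x)‖ ‖DP x‖ + ‖Dψ x‖ ‖h (P x)‖`, and `‖DP‖`, `‖Dψ‖` are bounded on `K`
by constants independent of `h`; off `K` the derivative is zero.
-/

open Metric

/-- The cutoff `φ ∘ dist(·, M)` is smooth, although the distance itself is in general not smooth
at points of `M`. -/
lemma contDiff_cutoff {E : Type*} [NormedAddCommGroup E] [NormedSpace ℝ E] {M : Set E} {δ : ℝ}
    (hδ : 0 < δ)
    (hdist : ContDiffOn ℝ (⊤ : ℕ∞) (fun x => infDist x M ^ 2) {x | infDist x M < 3 * δ})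
    {φ : ℝ → ℝ} (hφ : ContDiff ℝ (⊤ : ℕ∞) φ)
    (hφ1 : ∀ s < δ, φ s = 1) (hφ0 : ∀ s > 2 * δ, φ s = 0) :
    ContDiff ℝ (⊤ : ℕ∞) (fun x => φ (infDist x M)) := by
  have hc : Continuous fun x : E => infDist x M := continuous_infDist_pt M
  rw [contDiff_iff_contDiffAt]
  intro x
  rcases lt_or_ge (infDist x M) δ with h1 | h1
  · have : (fun x => φ (infDist x M)) =ᶠ[nhds x] fun _ => (1 : ℝ) := by
      filter_upwards [(isOpen_lt hc continuous_const).mem_nhds h1] with y hy using hφ1 _ hy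
    exact contDiffAt_const.congr_of_eventuallyEq this
  rcases lt_or_ge (2 * δ) (infDist x M) with h2 | h2
  · have : (fun x => φ (infDist x M)) =ᶠ[nhds x] fun _ => (0 : ℝ) := by
      filter_upwards [(isOpen_lt continuous_const hc).mem_nhds h2] with y hy using hφ0 _ hy
    exact contDiffAt_const.congr_of_eventuallyEq this
  have hsq : ContDiffAt ℝ (⊤ : ℕ∞) (fun x => infDist x M ^ 2) x :=
    hdist.contDiffAt ((isOpen_lt hc continuous_const).mem_nhds
      (show infDist x M < 3 * δ by linarith))
  have hd : ContDiffAt ℝ (⊤ : ℕ∞) (fun x => √(infDist x M ^ 2)) x :=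
    hsq.sqrt (pow_ne_zero 2 (by linarith))
  simp only [Real.sqrt_sq infDist_nonneg] at hd
  exact hφ.contDiffAt.comp x hd

/-- Derivative bound for the cutoff extension `h̄` of `h` (Step (ii) of the proof of
Theorem 2.1): with `P` a smooth nearest-point projection onto the compact set `M` on
`U = {dist(·,M) < 3δ}` and `φ` a smooth cutoff, there is a constant `c > 0`, independent
of `h`, such that for every `C¹` map `h`, the extension
`h̄(x) = φ(dist(x,M)) • h(P x)` (for `dist(x,M) < 2δ`, and `0` otherwise) is `C¹`,
agrees with `h` on `M`, is bounded by `sup_M ‖h‖`, and its derivative is bounded by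
`c (sup_M ‖h‖ + sup_M ‖Dh‖)`. -/
theorem stmt_10 {L₁ L₂ : ℕ} (hL₁ : 1 ≤ L₁) (hL₂ : 1 ≤ L₂)
    (M : Set (EuclideanSpace ℝ (Fin L₁))) (hM : M.Nonempty) (hMc : IsCompact M)
    (δ : ℝ) (hδ : 0 < δ)
    (U : Set (EuclideanSpace ℝ (Fin L₁)))
    (hU : U = {x | Metric.infDist x M < 3 * δ})
    (P : EuclideanSpace ℝ (Fin L₁) → EuclideanSpace ℝ (Fin L₁))
    (hP : ContDiffOn ℝ (⊤ : ℕ∞) P U)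
    (hproj : ∀ x ∈ U, P x ∈ M ∧ ‖x - P x‖ = Metric.infDist x M)
    (hdist : ContDiffOn ℝ (⊤ : ℕ∞) (fun x => Metric.infDist x M ^ 2) U)
    (φ : ℝ → ℝ) (hφ : ContDiff ℝ (⊤ : ℕ∞) φ)
    (hφ01 : ∀ s, 0 ≤ φ s ∧ φ s ≤ 1)
    (hφ1 : ∀ s < δ, φ s = 1) (hφ0 : ∀ s > 2 * δ, φ s = 0) :
    ∃ c > (0 : ℝ), ∀ h : EuclideanSpace ℝ (Fin L₁) → EuclideanSpace ℝ (Fin L₂),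
      ContDiff ℝ 1 h →
      ∀ hbar : EuclideanSpace ℝ (Fin L₁) → EuclideanSpace ℝ (Fin L₂),
        (∀ x, hbar x = if Metric.infDist x M < 2 * δ
            then φ (Metric.infDist x M) • h (P x) else 0) →
        ContDiff ℝ 1 hbar ∧ (∀ x ∈ M, hbar x = h x) ∧
          (∀ x, ‖hbar x‖ ≤ ⨆ y : M, ‖h y‖) ∧
          (∀ x, ‖fderiv ℝ hbar x‖ ≤
            c * ((⨆ y : M, ‖h y‖) + ⨆ y : M, ‖fderiv ℝ h y‖)) := by
  subst hU
  have hc : Continuous fun x => infDist x M := continuous_infDist_pt M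
  have hUo : IsOpen {x | infDist x M < 3 * δ} := isOpen_lt hc continuous_const
  have hψ := contDiff_cutoff hδ hdist hφ hφ1 hφ0
  set ψ : EuclideanSpace ℝ (Fin L₁) → ℝ := fun x => φ (infDist x M) with hψdef
  have hφ2 : ∀ s ≥ 2 * δ, φ s = 0 := by
    have hcl : IsClosed {s | φ s = 0} := isClosed_eq hφ.continuous continuous_const
    intro s hs
    have hsub : Set.Ioi (2 * δ) ⊆ {s | φ s = 0} := fun t ht => hφ0 t ht
    have := closure_minimal hsub hcl
    rw [closure_Ioi] at this
    exact this hs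
  -- `K = {d ≤ 2δ}` is compact and contained in `U`.
  have hK : IsCompact (cthickening (2 * δ) M) := hMc.cthickening
  have hKmem : ∀ x, infDist x M ≤ 2 * δ → x ∈ cthickening (2 * δ) M := fun x hx => by
    rw [(hMc.isClosed).cthickening_eq_biUnion_closedBall (by linarith)]
    obtain ⟨y, hy, hxy⟩ := hMc.exists_infDist_eq_dist hM x
    exact Set.mem_biUnion hy (by rw [mem_closedBall]; linarith)
  have hKU : cthickening (2 * δ) M ⊆ {x | infDist x M < 3 * δ} := fun x hx => by
    rw [(hMc.isClosed).cthickening_eq_biUnion_closedBall (by linarith)] at hx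
    obtain ⟨y, hy, hxy⟩ := Set.mem_iUnion₂.1 hx
    have := infDist_le_dist_of_mem (x := x) hy
    rw [mem_closedBall] at hxy
    show infDist x M < 3 * δ
    linarith
  obtain ⟨A, hA⟩ := hK.exists_bound_of_continuousOn
    ((hP.continuousOn_fderiv_of_isOpen hUo (by norm_cast)).mono hKU)
  obtain ⟨B, hB⟩ := hK.exists_bound_of_continuousOn
    (hψ.continuous_fderiv (by norm_cast)).continuousOn
  obtain ⟨y₀, hy₀⟩ := hM
  have hy₀K : y₀ ∈ cthickening (2 * δ) M := self_subset_cthickening M hy₀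
  have hA0 : 0 ≤ A := (norm_nonneg _).trans (hA _ hy₀K)
  have hB0 : 0 ≤ B := (norm_nonneg _).trans (hB _ hy₀K)
  refine ⟨A + B + 1, by linarith, ?_⟩
  intro h hh hbar hbar_def
  have hbar_eq : hbar = fun x => ψ x • h (P x) := by
    funext x
    rw [hbar_def]
    split_ifs with hx
    · rfl
    · simp [hψdef, hφ2 _ (not_lt.1 hx)]
  have bdd : ∀ g : EuclideanSpace ℝ (Fin L₁) → ℝ, Continuous g →
      ∀ y ∈ M, g y ≤ ⨆ y : M, g y := fun g hg y hy => by
    have hbd : BddAbove (Set.range fun y : M => g y) := by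
      have := hMc.bddAbove_image hg.continuousOn
      rwa [Set.image_eq_range] at this
    exact le_ciSup hbd ⟨y, hy⟩
  have hS := bdd (fun y => ‖h y‖) hh.continuous.norm
  have hT := bdd (fun y => ‖fderiv ℝ h y‖) (hh.continuous_fderiv one_ne_zero).norm
  have hS0 : 0 ≤ ⨆ y : M, ‖h y‖ := (norm_nonneg _).trans (hS _ hy₀)
  have hT0 : 0 ≤ ⨆ y : M, ‖fderiv ℝ h y‖ := (norm_nonneg _).trans (hT _ hy₀)
  have hzero : ∀ x, 2 * δ < infDist x M → hbar =ᶠ[nhds x] fun _ => 0 := fun x hx => by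
    filter_upwards [(isOpen_lt continuous_const hc).mem_nhds hx] with y hy
    simp [hbar_eq, hψdef, hφ0 _ hy]
  have hPat : ∀ x, infDist x M < 3 * δ → ContDiffAt ℝ (⊤ : ℕ∞) P x := fun x hx =>
    hP.contDiffAt (hUo.mem_nhds hx)
  refine ⟨?_, ?_, ?_, ?_⟩
  · rw [contDiff_iff_contDiffAt]
    intro x
    rcases lt_or_ge (2 * δ) (infDist x M) with hx | hx
    · exact contDiffAt_const.congr_of_eventuallyEq (hzero x hx)
    · rw [hbar_eq]
      have h1 : (1 : WithTop ℕ∞) ≤ ((⊤ : ℕ∞) : WithTop ℕ∞) := by norm_cast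
      exact (hψ.contDiffAt.of_le h1).smul
        (hh.contDiffAt.comp x ((hPat x (by linarith)).of_le h1))
  · intro x hx
    have hd : infDist x M = 0 := infDist_zero_of_mem hx
    have hPx := (hproj x (show infDist x M < 3 * δ by linarith)).2
    rw [hd, norm_eq_zero, sub_eq_zero] at hPx
    simp [hbar_eq, hψdef, hd, hφ1 0 hδ, ← hPx]
  · intro x
    rcases lt_or_ge (2 * δ) (infDist x M) with hx | hx
    · rw [(hzero x hx).eq_of_nhds]
      simpa using hS0
    · have hPx := (hproj x (show infDist x M < 3 * δ by linarith)).1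
      rw [hbar_eq]
      simp only [norm_smul, Real.norm_eq_abs, hψdef, abs_of_nonneg (hφ01 _).1]
      calc φ (infDist x M) * ‖h (P x)‖ ≤ 1 * ‖h (P x)‖ := by
            gcongr
            exact (hφ01 _).2
        _ ≤ _ := by rw [one_mul]; exact hS _ hPx
  · intro x
    rcases lt_or_ge (2 * δ) (infDist x M) with hx | hx
    · rw [(hzero x hx).fderiv_eq]
      simp only [fderiv_fun_const, Pi.zero_apply, norm_zero]
      positivity
    · have hxU : infDist x M < 3 * δ := by linarith
      have hxK := hKmem x hx
      have hPx := (hproj x hxU).1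
      have dP := ((hPat x hxU).differentiableAt (by norm_cast)).hasFDerivAt
      have dh := (hh.differentiable one_ne_zero (P x)).hasFDerivAt
      have dψ := (hψ.differentiable (by norm_cast) x).hasFDerivAt
      have dbar : fderiv ℝ hbar x = ψ x • (fderiv ℝ h (P x)).comp (fderiv ℝ P x) +
          (fderiv ℝ ψ x).smulRight (h (P x)) := by
        rw [hbar_eq]
        exact (dψ.smul (dh.comp x dP)).fderiv
      rw [dbar]
      have hψ1 : ‖ψ x‖ ≤ 1 := by
        rw [Real.norm_eq_abs, abs_of_nonneg (hφ01 _).1]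
        exact (hφ01 _).2
      have e1 : ‖ψ x • (fderiv ℝ h (P x)).comp (fderiv ℝ P x)‖
          ≤ 1 * ((⨆ y : M, ‖fderiv ℝ h y‖) * A) := by
        rw [norm_smul]
        gcongr
        refine (ContinuousLinearMap.opNorm_comp_le _ _).trans ?_
        gcongr
        · exact hT _ hPx
        · exact hA x hxK
      have e2 : ‖(fderiv ℝ ψ x).smulRight (h (P x))‖ ≤ B * ⨆ y : M, ‖h y‖ := by
        rw [ContinuousLinearMap.norm_smulRight_apply]
        gcongr
        · exact hB x hxK
        · exact hS _ hPx
      refine (norm_add_le _ _).trans ((add_le_add e1 e2).trans ?_)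
      nlinarith [mul_nonneg hA0 hS0, mul_nonneg hB0 hT0]
end
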